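/- For all modal μ-calculus formulae φ, φ' over signature σ and every n ∈ ℕ, the following are equivalent: (1) φ and φ' are joint ≈^n_σ-consistent over T^2; (2) φ and φ' are joint ≅^n_σ-consistent over T^2. -/

import Mathlib

/-- Formulae of the modal μ-calculus (in negation normal form). -/
inductive Form : Type
  | pos : ℕ → Form
  | neg : ℕ → Form
  | or  : Form → Form → Form
  | and : Form → Form → Form
  | dia : Form → Form
  | box : Form → Form
  | var : ℕ → Form
  | mu  : ℕ → Form → Form
  | nu  : ℕ → Form → Form

namespace Form

/-- Fixpoint-free formulae: modal logic ML. -/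
def IsML : Form → Prop
  | pos _ => True
  | neg _ => True
  | or φ ψ => IsML φ ∧ IsML ψ
  | and φ ψ => IsML φ ∧ IsML ψ
  | dia φ => IsML φ
  | box φ => IsML φ
  | var _ => False
  | mu _ _ => False
  | nu _ _ => False

/-- Modal depth: maximal nesting of ◇ and □. -/
def depth : Form → ℕ
  | pos _ => 0
  | neg _ => 0
  | or φ ψ => max φ.depth ψ.depth
  | and φ ψ => max φ.depth ψ.depth
  | dia φ => φ.depth + 1
  | box φ => φ.depth + 1
  | var _ => 0
  | mu _ φ => φ.depth
  | nu _ φ => φ.depth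

/-- The set of propositions occurring in a formula. -/
def sig : Form → Set ℕ
  | pos p => {p}
  | neg p => {p}
  | or φ ψ => φ.sig ∪ ψ.sig
  | and φ ψ => φ.sig ∪ ψ.sig
  | dia φ => φ.sig
  | box φ => φ.sig
  | var _ => ∅
  | mu _ φ => φ.sig
  | nu _ φ => φ.sig

/-- The size of a formula (its length as a string, up to a constant factor). -/
def size : Form → ℕ
  | pos _ => 1
  | neg _ => 2
  | or φ ψ => φ.size + ψ.size + 1
  | and φ ψ => φ.size + ψ.size + 1
  | dia φ => φ.size + 1
  | box φ => φ.size + 1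
  | var _ => 1
  | mu _ φ => φ.size + 2
  | nu _ φ => φ.size + 2

end Form

/-- A set has at least `g` elements. -/
def AtLeastCard {W : Type} (g : ℕ) (S : Set W) : Prop :=
  ∃ f : Fin g → W, Function.Injective f ∧ ∀ i, f i ∈ S

/-- Pointed Kripke structures. -/
structure Model : Type 1 where
  W : Type
  root : W
  R : W → W → Prop
  val : W → ℕ → Prop

namespace Model

/-- Semantics of the μ-calculus, via Knaster–Tarski style clauses. -/
def interp (M : Model) : Form → (ℕ → Set M.W) → Set M.W
  | .pos p, _ => {w | M.val w p}
  | .neg p, _ => {w | ¬ M.val w p}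
  | .or φ ψ, e => M.interp φ e ∪ M.interp ψ e
  | .and φ ψ, e => M.interp φ e ∩ M.interp ψ e
  | .dia φ, e => {w | ∃ v, M.R w v ∧ v ∈ M.interp φ e}
  | .box φ, e => {w | ∀ v, M.R w v → v ∈ M.interp φ e}
  | .var x, e => e x
  | .mu x φ, e => sInf {S : Set M.W | M.interp φ (Function.update e x S) ⊆ S}
  | .nu x φ, e => sSup {S : Set M.W | S ⊆ M.interp φ (Function.update e x S)}

/-- `M ⊨ φ`: the root of `M` satisfies `φ`. -/
def Sat (M : Model) (φ : Form) : Prop := M.root ∈ M.interp φ fun _ => ∅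

/-- Points reachable from the root in exactly `k` steps (in a tree: points of depth `k`). -/
def stepsTo (M : Model) : ℕ → M.W → Prop
  | 0, w => w = M.root
  | (k+1), w => ∃ v, M.stepsTo k v ∧ M.R v w

/-- Membership in the `n`-prefix: depth at most `n`. -/
def InPrefix (M : Model) (n : ℕ) (w : M.W) : Prop := ∃ k ≤ n, M.stepsTo k w

/-- Tree models: every point is reachable from the root, the root has no predecessor,
and every point has at most one predecessor. -/
def IsTree (M : Model) : Prop :=
  (∀ w, Relation.ReflTransGen M.R M.root w) ∧
  (∀ w, ¬ M.R w M.root) ∧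
  (∀ w v v', M.R v w → M.R v' w → v = v')

/-- Outdegree at most `d`. -/
def outdegLE (M : Model) (d : ℕ) : Prop :=
  ∀ w, ¬ AtLeastCard (d+1) {v | M.R w v}

end Model

/-- The class `T^d` of all tree models of outdegree at most `d`. -/
def TreeC (d : ℕ) : Set Model := {M | M.IsTree ∧ M.outdegLE d}

/-- `(σ,n)`-bisimulations: bisimulations between the `n`-prefixes of the `σ`-reducts,
relating only points of equal depth and linking the roots. -/
structure IsNBisim (M M' : Model) (σ : Set ℕ) (n : ℕ) (Z : M.W → M'.W → Prop) : Prop where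
  root : Z M.root M'.root
  depthEq : ∀ ⦃w w'⦄, Z w w' → ∃ k ≤ n, M.stepsTo k w ∧ M'.stepsTo k w'
  base : ∀ ⦃w w'⦄, Z w w' → ∀ p ∈ σ, (M.val w p ↔ M'.val w' p)
  forth : ∀ ⦃w w'⦄, Z w w' → ∀ k, k < n → M.stepsTo k w →
      ∀ v, M.R w v → ∃ v', M'.R w' v' ∧ Z v v'
  back : ∀ ⦃w w'⦄, Z w w' → ∀ k, k < n → M'.stepsTo k w' →
      ∀ v', M'.R w' v' → ∃ v, M.R w v ∧ Z v v'

/-- `(σ,n)`-isomorphisms: `(σ,n)`-bisimulations bijective on the `n`-prefixes. -/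
def IsNIso (M M' : Model) (σ : Set ℕ) (n : ℕ) (Z : M.W → M'.W → Prop) : Prop :=
  IsNBisim M M' σ n Z ∧
  (∀ w w₁' w₂', Z w w₁' → Z w w₂' → w₁' = w₂') ∧
  (∀ w₁ w₂ w', Z w₁ w' → Z w₂ w' → w₁ = w₂) ∧
  (∀ w, M.InPrefix n w → ∃ w', Z w w') ∧
  (∀ w', M'.InPrefix n w' → ∃ w, Z w w')

/-- `M ≈ⁿ_σ M'`. -/
def NBisimEq (M M' : Model) (σ : Set ℕ) (n : ℕ) : Prop := ∃ Z, IsNBisim M M' σ n Z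

/-- `M ≅ⁿ_σ M'`. -/
def NIsoEq (M M' : Model) (σ : Set ℕ) (n : ℕ) : Prop := ∃ Z, IsNIso M M' σ n Z

/-- `ψ` separates `φ` from `φ'` over the class `C`: `φ ⊨ ψ` and `ψ ⊨ ¬φ'` over `C`. -/
def Separates (C : Set Model) (ψ φ φ' : Form) : Prop :=
  (∀ M ∈ C, M.Sat φ → M.Sat ψ) ∧ (∀ M ∈ C, M.Sat ψ → ¬ M.Sat φ')

namespace Model

theorem interp_mono (M : Model) (φ : Form) {e e' : ℕ → Set M.W} (h : ∀ x, e x ⊆ e' x) :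
    M.interp φ e ⊆ M.interp φ e' := by
  have update_mono {e e' : ℕ → Set M.W} (h : ∀ x, e x ⊆ e' x) (x : ℕ) (S : Set M.W) (y : ℕ) :
      Function.update e x S y ⊆ Function.update e' x S y := by
    by_cases hy : y = x
    · subst hy; simp
    · simpa [Function.update_of_ne hy] using h y
  induction φ generalizing e e' with
  | pos p => exact subset_rfl
  | neg p => exact subset_rfl
  | or φ ψ ih₁ ih₂ => exact Set.union_subset_union (ih₁ h) (ih₂ h)
  | and φ ψ ih₁ ih₂ => exact Set.inter_subset_inter (ih₁ h) (ih₂ h)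
  | dia φ ih => exact fun w ⟨v, hv, hφ⟩ => ⟨v, hv, ih h hφ⟩
  | box φ ih => exact fun w hw v hv => ih h (hw v hv)
  | var x => exact h x
  | mu x φ ih => exact sInf_le_sInf fun S hS => (ih (update_mono h x S)).trans hS
  | nu x φ ih => exact sSup_le_sSup fun S hS => Set.Subset.trans hS (ih (update_mono h x S))

/-- Bounded morphisms: functional bisimulations. -/
structure IsBoundedMorphism (N M : Model) (f : N.W → M.W) : Prop where
  root : f N.root = M.root
  val : ∀ q p, N.val q p ↔ M.val (f q) p
  forth : ∀ ⦃q r⦄, N.R q r → M.R (f q) (f r)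
  back : ∀ ⦃q v⦄, M.R (f q) v → ∃ r, N.R q r ∧ f r = v

namespace IsBoundedMorphism

variable {N M : Model} {f : N.W → M.W}

theorem interp_preimage (hf : IsBoundedMorphism N M f) (φ : Form) (e : ℕ → Set M.W) :
    N.interp φ (fun x => f ⁻¹' e x) = f ⁻¹' M.interp φ e := by
  have preimage_update (e : ℕ → Set M.W) (x : ℕ) (S : Set M.W) :
      (fun y => f ⁻¹' Function.update e x S y) =
        Function.update (fun y => f ⁻¹' e y) x (f ⁻¹' S) := by
    funext y
    by_cases hy : y = x
    · subst hy; simp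
    · simp [Function.update_of_ne hy]
  have update_mono (e : ℕ → Set N.W) (x : ℕ) {S T : Set N.W} (h : S ⊆ T) (y : ℕ) :
      Function.update e x S y ⊆ Function.update e x T y := by
    by_cases hy : y = x
    · subst hy; simpa using h
    · simp [Function.update_of_ne hy]
  induction φ generalizing e with
  | pos p => ext q; exact hf.val q p
  | neg p => ext q; exact not_congr (hf.val q p)
  | or φ ψ ih₁ ih₂ => simp only [interp, ih₁, ih₂, Set.preimage_union]
  | and φ ψ ih₁ ih₂ => simp only [interp, ih₁, ih₂, Set.preimage_inter]
  | dia φ ih =>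
    ext q
    simp only [interp, ih, Set.mem_preimage, Set.mem_ofPred_eq]
    constructor
    · rintro ⟨r, hr, hφ⟩
      exact ⟨f r, hf.forth hr, hφ⟩
    · rintro ⟨v, hv, hφ⟩
      obtain ⟨r, hr, rfl⟩ := hf.back hv
      exact ⟨r, hr, hφ⟩
  | box φ ih =>
    ext q
    simp only [interp, ih, Set.mem_preimage, Set.mem_ofPred_eq]
    constructor
    · intro h v hv
      obtain ⟨r, hr, rfl⟩ := hf.back hv
      exact h r hr
    · exact fun h r hr => h (f r) (hf.forth hr)
  | var x => rfl
  | mu x φ ih =>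
    apply Set.Subset.antisymm
    · intro q hq S hS
      refine hq (f ⁻¹' S) ?_
      change N.interp φ _ ⊆ _
      rw [← preimage_update, ih]
      exact Set.preimage_mono hS
    · intro q hq T hT
      refine hq {w | ∀ r, f r = w → r ∈ T} ?_ q rfl
      rintro _ hw r rfl
      refine hT (N.interp_mono φ
        (update_mono _ x (S := f ⁻¹' {w | ∀ r, f r = w → r ∈ T}) fun r hr => hr r rfl) ?_)
      rw [← preimage_update, ih]
      exact hw
  | nu x φ ih =>
    apply Set.Subset.antisymm
    · rintro q ⟨T, hT, hq⟩
      refine ⟨f '' T, ?_, q, hq, rfl⟩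
      rintro _ ⟨r, hr, rfl⟩
      change r ∈ f ⁻¹' _
      rw [← ih, preimage_update]
      exact N.interp_mono φ (update_mono _ x (Set.subset_preimage_image f T)) (hT hr)
    · rintro q ⟨S, hS, hq⟩
      refine ⟨f ⁻¹' S, ?_, hq⟩
      change _ ⊆ N.interp φ _
      rw [← preimage_update, ih]
      exact Set.preimage_mono hS

theorem sat_iff (hf : IsBoundedMorphism N M f) (φ : Form) : N.Sat φ ↔ M.Sat φ := by
  have h := hf.interp_preimage φ fun _ => ∅
  simp only [Set.preimage_empty] at h
  rw [Sat, Sat, h, Set.mem_preimage, hf.root]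

theorem stepsTo (hf : IsBoundedMorphism N M f) {k : ℕ} {q : N.W} (h : N.stepsTo k q) :
    M.stepsTo k (f q) := by
  induction k generalizing q with
  | zero => exact (congrArg f h).trans hf.root
  | succ k ih =>
    obtain ⟨r, hr, hR⟩ := h
    exact ⟨f r, ih hr, hf.forth hR⟩

end IsBoundedMorphism

theorem IsTree.stepsTo_unique {M : Model} (hM : M.IsTree) {k l : ℕ} {w : M.W}
    (hk : M.stepsTo k w) (hl : M.stepsTo l w) : k = l := by
  induction k generalizing l w with
  | zero =>
    cases l with
    | zero => rfl
    | succ l =>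
      obtain rfl : w = M.root := hk
      obtain ⟨v, -, hv⟩ := hl
      exact (hM.2.1 v hv).elim
  | succ k ih =>
    obtain ⟨v, hkv, hv⟩ := hk
    cases l with
    | zero =>
      obtain rfl : w = M.root := hl
      exact (hM.2.1 v hv).elim
    | succ l =>
      obtain ⟨v', hlv, hv'⟩ := hl
      obtain rfl := hM.2.2 w v v' hv hv'
      rw [ih hkv hlv]

end Model

theorem AtLeastCard.image {V W : Type} {g : ℕ} {S : Set V} {T : Set W} (h : AtLeastCard g S)
    (i : V → W) (hi : Set.InjOn i S) (hST : Set.MapsTo i S T) : AtLeastCard g T := by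
  obtain ⟨f, hf, hS⟩ := h
  exact ⟨i ∘ f, fun a b hab => hf (hi (hS a) (hS b) hab), fun a => hST (hS a)⟩

theorem not_atLeastCard_three_pair {W : Type} (a b : W) : ¬ AtLeastCard 3 ({a, b} : Set W) := by
  rintro ⟨f, hf, h⟩
  have h01 : f 0 ≠ f 1 := fun h => by simpa using hf h
  have h02 : f 0 ≠ f 2 := fun h => by simpa using hf h
  have h12 : f 1 ≠ f 2 := fun h => by simpa using hf h
  have h0 := h 0
  have h1 := h 1
  have h2 := h 2
  simp only [Set.mem_insert_iff, Set.mem_singleton_iff] at h0 h1 h2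
  grind

theorem eq_empty_or_eq_pair_of_not_atLeastCard_three {W : Type} {S : Set W}
    (h : ¬ AtLeastCard 3 S) : S = ∅ ∨ ∃ a b, S = {a, b} := by
  rcases S.eq_empty_or_nonempty with hS | ⟨a, ha⟩
  · exact Or.inl hS
  refine Or.inr ?_
  by_cases hb : ∃ b ∈ S, b ≠ a
  · obtain ⟨b, hb, hba⟩ := hb
    refine ⟨a, b, Set.Subset.antisymm (fun c hc => ?_) (by grind)⟩
    by_contra hcab
    simp only [Set.mem_insert_iff, Set.mem_singleton_iff, not_or] at hcab
    refine h ⟨![a, b, c], ?_, ?_⟩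
    · intro i j hij
      fin_cases i <;> fin_cases j <;> simp_all
    · intro i
      fin_cases i <;> simp_all
  · exact ⟨a, a, by grind⟩

/-- A relation between two sets of at most two points that is total on both sides has a
subrelation that is still total on both sides and consists of at most two pairs. -/
theorem exists_small_subrelation {V W : Type} {A : Set V} {B : Set W} {Z : V → W → Prop}
    (hA : ¬ AtLeastCard 3 A) (hB : ¬ AtLeastCard 3 B)
    (forth : ∀ a ∈ A, ∃ b ∈ B, Z a b) (back : ∀ b ∈ B, ∃ a ∈ A, Z a b) :
    ∃ P : Set (V × W), (∀ p ∈ P, p.1 ∈ A ∧ p.2 ∈ B ∧ Z p.1 p.2) ∧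
      (∀ a ∈ A, ∃ b, (a, b) ∈ P) ∧ (∀ b ∈ B, ∃ a, (a, b) ∈ P) ∧ ¬ AtLeastCard 3 P := by
  have hempty : ¬ AtLeastCard 3 (∅ : Set (V × W)) := fun ⟨_, _, h⟩ => h 0
  rcases eq_empty_or_eq_pair_of_not_atLeastCard_three hA with rfl | ⟨a, b, rfl⟩
  · exact ⟨∅, by simp, by simp, fun b hb => by simpa using back b hb, hempty⟩
  rcases eq_empty_or_eq_pair_of_not_atLeastCard_three hB with rfl | ⟨c, d, rfl⟩
  · exact ⟨∅, by simp, fun a ha => by simpa using forth a ha, by simp, hempty⟩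
  simp only [Set.mem_insert_iff, Set.mem_singleton_iff, forall_eq_or_imp, forall_eq,
    exists_eq_or_imp, exists_eq_left] at forth back
  have hmatch : (Z a c ∧ Z b d) ∨ (Z a d ∧ Z b c) := by tauto
  rcases hmatch with ⟨h₁, h₂⟩ | ⟨h₁, h₂⟩
  · refine ⟨{(a, c), (b, d)}, ?_, ?_, ?_, not_atLeastCard_three_pair _ _⟩ <;> grind
  · refine ⟨{(a, d), (b, c)}, ?_, ?_, ?_, not_atLeastCard_three_pair _ _⟩ <;> grind

/-- A choice, for all related points above depth `n`, of at most two pairs of related successors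
that cover all successors on both sides. -/
structure IsSuccPairing (M M' : Model) (n : ℕ) (Z : M.W → M'.W → Prop)
    (P : M.W → M'.W → M.W → M'.W → Prop) : Prop where
  root : Z M.root M'.root
  left : ∀ ⦃w w' v v'⦄, P w w' v v' → M.R w v
  right : ∀ ⦃w w' v v'⦄, P w w' v v' → M'.R w' v'
  rel : ∀ ⦃w w' v v'⦄, P w w' v v' → Z v v'
  forth : ∀ ⦃w w'⦄, Z w w' → ∀ k < n, M.stepsTo k w → ∀ v, M.R w v → ∃ v', P w w' v v'
  back : ∀ ⦃w w'⦄, Z w w' → ∀ k < n, M'.stepsTo k w' → ∀ v', M'.R w' v' → ∃ v, P w w' v v'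
  card : ∀ w w', ¬ AtLeastCard 3 {p : M.W × M'.W | P w w' p.1 p.2}

theorem IsNBisim.exists_isSuccPairing {M M' : Model} {σ : Set ℕ} {n : ℕ}
    {Z : M.W → M'.W → Prop} (hZ : IsNBisim M M' σ n Z) (hM : M ∈ TreeC 2) (hM' : M' ∈ TreeC 2) :
    ∃ P, IsSuccPairing M M' n Z P := by
  have key (w : M.W) (w' : M'.W) : ∃ P : Set (M.W × M'.W),
      (∀ p ∈ P, M.R w p.1 ∧ M'.R w' p.2 ∧ Z p.1 p.2) ∧
      (Z w w' → ∀ k < n, M.stepsTo k w → ∀ v, M.R w v → ∃ v', (v, v') ∈ P) ∧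
      (Z w w' → ∀ k < n, M'.stepsTo k w' → ∀ v', M'.R w' v' → ∃ v, (v, v') ∈ P) ∧
      ¬ AtLeastCard 3 P := by
    by_cases h : Z w w' ∧ ∃ k < n, M.stepsTo k w ∧ M'.stepsTo k w'
    · obtain ⟨hww', k, hk, hw, hw'⟩ := h
      obtain ⟨P, h₁, h₂, h₃, h₄⟩ := exists_small_subrelation (hM.2 w) (hM'.2 w')
        (hZ.forth hww' k hk hw) (hZ.back hww' k hk hw')
      exact ⟨P, h₁, fun _ _ _ _ => h₂, fun _ _ _ _ => h₃, h₄⟩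
    · refine ⟨∅, by simp, fun hww' k hk hw => ?_, fun hww' k hk hw' => ?_,
        fun ⟨_, _, h⟩ => h 0⟩
      · obtain ⟨l, -, hl, hl'⟩ := hZ.depthEq hww'
        obtain rfl := hM.1.stepsTo_unique hw hl
        exact (h ⟨hww', k, hk, hw, hl'⟩).elim
      · obtain ⟨l, -, hl, hl'⟩ := hZ.depthEq hww'
        obtain rfl := hM'.1.stepsTo_unique hw' hl'
        exact (h ⟨hww', k, hk, hl, hw'⟩).elim
  choose P h₁ h₂ h₃ h₄ using key
  exact ⟨fun w w' v v' => (v, v') ∈ P w w', hZ.root, fun w w' v v' h => (h₁ w w' _ h).1,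
    fun w w' v v' h => (h₁ w w' _ h).2.1, fun w w' v v' h => (h₁ w w' _ h).2.2, h₂, h₃, h₄⟩

namespace IsSuccPairing

variable {M M' : Model} {n : ℕ} {Z : M.W → M'.W → Prop} {P : M.W → M'.W → M.W → M'.W → Prop}

theorem swap (h : IsSuccPairing M M' n Z P) :
    IsSuccPairing M' M n (fun w' w => Z w w') (fun w' w v' v => P w w' v v') where
  root := h.root
  left _ _ _ _ hP := h.right hP
  right _ _ _ _ hP := h.left hP
  rel _ _ _ _ hP := h.rel hP
  forth _ _ hZ := h.back hZ
  back _ _ hZ := h.forth hZ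
  card w' w hc := h.card w w' <| hc.image Prod.swap Prod.swap_injective.injOn fun _ hp => hp

end IsSuccPairing

/-- The successor relation of `pairModel`: paired successors above depth `n`, successors in the
first component from depth `n` on. -/
def PairStep (M M' : Model) (n : ℕ) (P : M.W → M'.W → M.W → M'.W → Prop)
    (q r : M.W × M'.W) : Prop :=
  (∃ k < n, M.stepsTo k q.1 ∧ P q.1 q.2 r.1 r.2) ∨
    (∃ k ≥ n, M.stepsTo k q.1 ∧ M.R q.1 r.1 ∧ r.2 = q.2)

/-- The copy of `M` in which points of the `n`-prefix are duplicated as prescribed by `P`. -/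
def pairModel (M M' : Model) (n : ℕ) (P : M.W → M'.W → M.W → M'.W → Prop) : Model where
  W := {q : M.W × M'.W // Relation.ReflTransGen (PairStep M M' n P) (M.root, M'.root) q}
  root := ⟨(M.root, M'.root), .refl⟩
  R q r := PairStep M M' n P q.1 r.1
  val q p := M.val q.1.1 p

namespace IsSuccPairing

variable {M M' : Model} {n : ℕ} {Z : M.W → M'.W → Prop} {P : M.W → M'.W → M.W → M'.W → Prop}

theorem pairStep_left (h : IsSuccPairing M M' n Z P) {q r : M.W × M'.W}
    (hqr : PairStep M M' n P q r) : M.R q.1 r.1 := by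
  rcases hqr with ⟨k, -, -, hP⟩ | ⟨k, -, -, hR, -⟩
  · exact h.left hP
  · exact hR

theorem exists_stepsTo (h : IsSuccPairing M M' n Z P) (q : (pairModel M M' n P).W) :
    ∃ k, M.stepsTo k q.1.1 ∧ (k ≤ n → Z q.1.1 q.1.2) := by
  obtain ⟨q, hq⟩ := q
  induction hq with
  | refl => exact ⟨0, rfl, fun _ => h.root⟩
  | tail _ hstep _ =>
    rcases hstep with ⟨k, -, hs, hP⟩ | ⟨k, hk, hs, hR, -⟩
    · exact ⟨k + 1, ⟨_, hs, h.left hP⟩, fun _ => h.rel hP⟩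
    · exact ⟨k + 1, ⟨_, hs, hR⟩, fun hk' => by omega⟩

theorem isBoundedMorphism (h : IsSuccPairing M M' n Z P) :
    (pairModel M M' n P).IsBoundedMorphism M (fun q => q.1.1) where
  root := rfl
  val _ _ := Iff.rfl
  forth _ _ hqr := h.pairStep_left hqr
  back q v hv := by
    obtain ⟨k, hk, hZ⟩ := h.exists_stepsTo q
    by_cases hkn : k < n
    · obtain ⟨v', hP⟩ := h.forth (hZ hkn.le) k hkn hk v hv
      have hstep : PairStep M M' n P q.1 (v, v') := Or.inl ⟨k, hkn, hk, hP⟩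
      exact ⟨⟨(v, v'), q.2.tail hstep⟩, hstep, rfl⟩
    · have hstep : PairStep M M' n P q.1 (v, q.1.2) := Or.inr ⟨k, by omega, hk, hv, rfl⟩
      exact ⟨⟨(v, q.1.2), q.2.tail hstep⟩, hstep, rfl⟩

theorem isTree (h : IsSuccPairing M M' n Z P) (hM : M.IsTree) (hM' : M'.IsTree) :
    (pairModel M M' n P).IsTree := by
  refine ⟨?_, fun q hq => hM.2.1 _ (h.pairStep_left hq), ?_⟩
  · rintro ⟨q, hq⟩
    induction hq with
    | refl => exact .refl
    | tail hq hstep ih => exact ih.tail hstep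
  · intro r q q' hq hq'
    have h₁ : q.1.1 = q'.1.1 := hM.2.2 _ _ _ (h.pairStep_left hq) (h.pairStep_left hq')
    refine Subtype.ext (Prod.ext h₁ ?_)
    rcases hq with ⟨k, hk, hs, hP⟩ | ⟨k, hk, hs, -, hr⟩ <;>
      rcases hq' with ⟨l, hl, hs', hP'⟩ | ⟨l, hl, hs', -, hr'⟩
    · exact hM'.2.2 _ _ _ (h.right hP) (h.right hP')
    · have := hM.stepsTo_unique (h₁ ▸ hs) hs'
      omega
    · have := hM.stepsTo_unique (h₁ ▸ hs) hs'
      omega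
    · exact hr.symm.trans hr'

theorem outdegLE (h : IsSuccPairing M M' n Z P) (hM : M ∈ TreeC 2) :
    (pairModel M M' n P).outdegLE 2 := by
  intro q hcard
  obtain ⟨k, hk, -⟩ := h.exists_stepsTo q
  by_cases hkn : k < n
  · refine h.card q.1.1 q.1.2 (hcard.image Subtype.val Subtype.val_injective.injOn ?_)
    rintro r (⟨l, -, -, hP⟩ | ⟨l, hl, hs, -⟩)
    · exact hP
    · have := hM.1.stepsTo_unique hk hs
      omega
  · have hsnd {r : (pairModel M M' n P).W} (hr : PairStep M M' n P q.1 r.1) :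
        r.1.2 = q.1.2 := by
      rcases hr with ⟨l, hl, hs, -⟩ | ⟨l, -, -, -, hr⟩
      · have := hM.1.stepsTo_unique hk hs
        omega
      · exact hr
    refine hM.2 q.1.1 (hcard.image (fun r => r.1.1) ?_ fun r hr => h.pairStep_left hr)
    exact fun r hr r' hr' hrr' => Subtype.ext (Prod.ext hrr' ((hsnd hr).trans (hsnd hr').symm))

theorem pairModel_mem_treeC (h : IsSuccPairing M M' n Z P) (hM : M ∈ TreeC 2)
    (hM' : M' ∈ TreeC 2) : pairModel M M' n P ∈ TreeC 2 :=
  ⟨h.isTree hM.1 hM'.1, h.outdegLE hM⟩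

theorem exists_swap_step (h : IsSuccPairing M M' n Z P) (hM : M.IsTree)
    {k : ℕ} (hk : k < n) {q r : (pairModel M M' n P).W}
    {q' : (pairModel M' M n fun w' w v' v => P w w' v v').W}
    (hq : (pairModel M M' n P).stepsTo k q) (hq' : (pairModel M' M n _).stepsTo k q')
    (hswap : q'.1 = q.1.swap) (hqr : (pairModel M M' n P).R q r) :
    ∃ r', r'.1 = r.1.swap ∧ (pairModel M' M n fun w' w v' v => P w w' v v').R q' r' := by
  have hs' := h.swap.isBoundedMorphism.stepsTo hq'
  have hstep : PairStep M' M n (fun w' w v' v => P w w' v v') q'.1 r.1.swap := by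
    rcases hqr with ⟨l, hl, hs, hP⟩ | ⟨l, hl, hs, -⟩
    · refine Or.inl ⟨k, hk, hs', ?_⟩
      rw [hswap]
      exact hP
    · have := hM.stepsTo_unique (h.isBoundedMorphism.stepsTo hq) hs
      omega
  exact ⟨⟨r.1.swap, q'.2.tail hstep⟩, rfl, hstep⟩

theorem exists_swap_stepsTo (h : IsSuccPairing M M' n Z P) (hM : M.IsTree)
    {k : ℕ} (hk : k ≤ n) {q : (pairModel M M' n P).W} (hq : (pairModel M M' n P).stepsTo k q) :
    ∃ q', q'.1 = q.1.swap ∧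
      (pairModel M' M n fun w' w v' v => P w w' v v').stepsTo k q' := by
  induction k generalizing q with
  | zero =>
    obtain rfl : q = _ := hq
    exact ⟨_, rfl, rfl⟩
  | succ k ih =>
    obtain ⟨q₀, hq₀, hR⟩ := hq
    obtain ⟨q₀', hswap, hq₀'⟩ := ih (by omega) hq₀
    obtain ⟨q', hq', hR'⟩ := h.exists_swap_step hM hk hq₀ hq₀' hswap hR
    exact ⟨q', hq', q₀', hq₀', hR'⟩

theorem isNIso (h : IsSuccPairing M M' n Z P) {σ : Set ℕ} (hZ : IsNBisim M M' σ n Z)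
    (hM : M.IsTree) (hM' : M'.IsTree) :
    IsNIso (pairModel M M' n P) (pairModel M' M n fun w' w v' v => P w w' v v') σ n
      fun q q' => q'.1 = q.1.swap ∧ ∃ k ≤ n, (pairModel M M' n P).stepsTo k q ∧
        (pairModel M' M n fun w' w v' v => P w w' v v').stepsTo k q' := by
  refine ⟨⟨⟨rfl, 0, by omega, rfl, rfl⟩, fun q q' hqq' => hqq'.2, ?_, ?_, ?_⟩, ?_, ?_, ?_, ?_⟩
  · rintro q q' ⟨hswap, k, hk, hq, -⟩ p hp
    obtain ⟨l, hl, hrel⟩ := h.exists_stepsTo q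
    obtain rfl := hM.stepsTo_unique (h.isBoundedMorphism.stepsTo hq) hl
    have hval := hZ.base (hrel hk) p hp
    change M.val q.1.1 p ↔ M'.val q'.1.1 p
    rw [hswap]
    exact hval
  · rintro q q' ⟨hswap, l, -, hq, hq'⟩ k hk hqk r hqr
    obtain rfl := (h.isTree hM hM').stepsTo_unique hq hqk
    obtain ⟨r', hr', hR⟩ := h.exists_swap_step hM hk hq hq' hswap hqr
    exact ⟨r', hR, hr', l + 1, hk, ⟨q, hq, hqr⟩, q', hq', hR⟩
  · rintro q q' ⟨hswap, l, -, hq, hq'⟩ k hk hqk r' hqr'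
    obtain rfl := (h.swap.isTree hM' hM).stepsTo_unique hq' hqk
    obtain ⟨r, hr, hR⟩ := h.swap.exists_swap_step hM' hk hq' hq
      (by rw [hswap, Prod.swap_swap]) hqr'
    exact ⟨r, hR, by rw [hr, Prod.swap_swap], l + 1, hk, ⟨q, hq, hR⟩, q', hq', hqr'⟩
  · exact fun q q₁ q₂ h₁ h₂ => Subtype.ext (h₁.1.trans h₂.1.symm)
  · exact fun q₁ q₂ q' h₁ h₂ =>
      Subtype.ext (Prod.swap_injective (h₁.1.symm.trans h₂.1))
  · rintro q ⟨k, hk, hq⟩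
    obtain ⟨q', hswap, hq'⟩ := h.exists_swap_stepsTo hM hk hq
    exact ⟨q', hswap, k, hk, hq, hq'⟩
  · rintro q' ⟨k, hk, hq'⟩
    obtain ⟨q, hswap, hq⟩ := h.swap.exists_swap_stepsTo hM' hk hq'
    exact ⟨q, by rw [hswap, Prod.swap_swap], k, hk, hq, hq'⟩

end IsSuccPairing

/-- over `T^2`, joint `≈ⁿ_σ`-consistency and joint `≅ⁿ_σ`-consistency coincide. -/
theorem stmt_9 (φ φ' : Form) (σ : Set ℕ) (hσ : σ.Finite)
    (h1 : φ.sig ⊆ σ) (h2 : φ'.sig ⊆ σ) (n : ℕ) :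
    (∃ M ∈ TreeC 2, ∃ M' ∈ TreeC 2, M.Sat φ ∧ M'.Sat φ' ∧ NBisimEq M M' σ n) ↔
    (∃ M ∈ TreeC 2, ∃ M' ∈ TreeC 2, M.Sat φ ∧ M'.Sat φ' ∧ NIsoEq M M' σ n) := by
  constructor
  · rintro ⟨M, hM, M', hM', hφ, hφ', Z, hZ⟩
    obtain ⟨P, hP⟩ := hZ.exists_isSuccPairing hM hM'
    exact ⟨_, hP.pairModel_mem_treeC hM hM', _, hP.swap.pairModel_mem_treeC hM' hM,
      (hP.isBoundedMorphism.sat_iff φ).2 hφ, (hP.swap.isBoundedMorphism.sat_iff φ').2 hφ',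
      _, hP.isNIso hZ hM.1 hM'.1⟩
  · rintro ⟨M, hM, M', hM', hφ, hφ', Z, hZ⟩
    exact ⟨M, hM, M', hM', hφ, hφ', Z, hZ.1⟩
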